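/- arXiv:1102.0264 — 2 statements merged into one kernel-verified Lean document; each statement's English description precedes it below -/
import Mathlib

section
/- Let M be a measurement cover on a finite set of measurements X with finite outcome set O, and let (e_C)_{C∈M} be a family where each e_C is an ℝ≥0-distribution on the sections over C (not assumed compatible). Then there exists a real-valued global section for this family — a function d : O^X → ℝ with Σ_{t : X→O} d(t) = 1 and, for every C ∈ M and section s over C, Σ_{t : X→O, t|C = s} d(t) = e_C(s) — if and only if the family is compatible (no-signalling), i.e. e_C|C∩C' = e_{C'}|C∩C' for all C, C' ∈ M. -/
open Finset

/-- Restriction of a section over `U` to a subset `V ⊆ U`. -/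
def resSec {X O : Type} {U V : Finset X} (h : V ⊆ U) (s : {x // x ∈ U} → O) :
    {x // x ∈ V} → O :=
  fun v => s ⟨v.1, h v.2⟩

/-- Restriction of a global assignment `t : X → O` to the context `C`. -/
def resGlob {X O : Type} (t : X → O) (C : Finset X) : {x // x ∈ C} → O :=
  fun c => t c.1

/-- Marginal of an `R`-valued distribution on sections over `U` to `V ⊆ U`:
`(d|V)(s) = ∑_{s' restricting to s} d(s')`. -/
def marg {X O R : Type} [DecidableEq X] [Fintype O] [DecidableEq O]
    [AddCommMonoid R] {U V : Finset X} (h : V ⊆ U)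
    (d : ({x // x ∈ U} → O) → R) : ({x // x ∈ V} → O) → R :=
  fun s => ∑ s' ∈ univ.filter (fun s' => resSec h s' = s), d s'

/-- Marginal of a distribution on global assignments to the context `C`. -/
def globMarg {X O R : Type} [Fintype X] [DecidableEq X] [Fintype O] [DecidableEq O]
    [AddCommMonoid R] (d : (X → O) → R) (C : Finset X) : ({x // x ∈ C} → O) → R :=
  fun s => ∑ t ∈ univ.filter (fun t => resGlob t C = s), d t

/-!
A global section is built one context at a time. To correct a global distribution `d` at a new
context `C`, add the push-forward of the defect `e C - d|C` along the map extending a section over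
`C` by a fixed assignment `t₀` off `C`. Since the restriction to `C'` of such an extension depends
only on the section's restriction to `C ∩ C'`, the correction is invisible at `C'` as soon as the
defect has zero marginal on `C ∩ C'`, which is what no-signalling gives at the contexts where `d`
is already right. The defect is signed, hence the need for negative values.
-/

section Pushforward

variable {α β γ R S : Type*} [Fintype α] [DecidableEq β] [AddCommMonoid R] [AddCommMonoid S]

/-- The push-forward of an `R`-valued weight on a finite type along a map, by summation over
fibres. Marginals and extensions of distributions are both of this form. It is bundled as an
additive homomorphism in the weight. -/
def pushforward (f : α → β) : (α → R) →+ (β → R) where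
  toFun d y := ∑ x with f x = y, d x
  map_zero' := funext fun _ => sum_const_zero
  map_add' _ _ := funext fun _ => sum_add_distrib

theorem pushforward_apply (f : α → β) (d : α → R) (y : β) :
    pushforward f d y = ∑ x with f x = y, d x :=
  rfl

theorem pushforward_id [DecidableEq α] (d : α → R) : pushforward id d = d := by
  funext x
  simp [pushforward_apply, filter_eq']

theorem pushforward_pushforward [Fintype β] [DecidableEq γ] (g : β → γ) (f : α → β) (d : α → R) :
    pushforward g (pushforward f d) = pushforward (g ∘ f) d := by
  funext z
  simp only [pushforward_apply, sum_fiberwise_eq_sum_filter, mem_filter, mem_univ, true_and,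
    Function.comp_apply]

theorem sum_pushforward [Fintype β] (f : α → β) (d : α → R) :
    ∑ y, pushforward f d y = ∑ x, d x :=
  sum_fiberwise univ f d

theorem pushforward_comp_addMonoidHom (φ : R →+ S) (f : α → β) (d : α → R) :
    pushforward f (φ ∘ d) = φ ∘ pushforward f d :=
  funext fun _ => (map_sum φ d _).symm

end Pushforward

section Extension

variable {X O : Type}

theorem resGlob_extend (t₀ : X → O) {C : Finset X} (s : {x // x ∈ C} → O) :
    resGlob (Function.extend Subtype.val s t₀) C = s :=
  Function.extend_comp Subtype.val_injective s t₀

theorem resGlob_extend_inter [DecidableEq X] (t₀ : X → O) {C : Finset X} (C' : Finset X)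
    (s : {x // x ∈ C} → O) :
    resGlob (Function.extend Subtype.val s t₀) C' =
      resGlob (Function.extend Subtype.val (resSec (inter_subset_left (s₂ := C')) s) t₀) C' := by
  funext ⟨x, hx'⟩
  by_cases hx : x ∈ C
  · simp only [resGlob, resSec, Function.extend_val_apply hx,
      Function.extend_val_apply (mem_inter.2 ⟨hx, hx'⟩)]
  · simp only [resGlob, Function.extend_val_apply' hx,
      Function.extend_val_apply' fun h => hx (mem_inter.1 h).1]

theorem nonempty_assignment_of_sum_ne_zero {R : Type*} [AddCommMonoid R] [DecidableEq X]
    [Fintype O] {M : Finset (Finset X)} (hcov : ∀ x, ∃ C ∈ M, x ∈ C)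
    {e : (C : Finset X) → ({x // x ∈ C} → O) → R} (he : ∀ C ∈ M, ∑ s, e C s ≠ 0) :
    Nonempty (X → O) := by
  choose C hC hx using hcov
  choose s _ _ using fun x => exists_ne_zero_of_sum_ne_zero (he (C x) (hC x))
  exact ⟨fun x => s x ⟨x, hx x⟩⟩

end Extension

section Marginal

variable {X O R : Type} [DecidableEq X] [Fintype O] [DecidableEq O] [AddCommMonoid R]

theorem marg_eq_pushforward {U V : Finset X} (h : V ⊆ U) (d : ({x // x ∈ U} → O) → R) :
    marg h d = pushforward (resSec h) d :=
  rfl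

theorem globMarg_eq_pushforward [Fintype X] (d : (X → O) → R) (C : Finset X) :
    globMarg d C = pushforward (resGlob · C) d :=
  rfl

theorem marg_sub {G : Type} [AddCommGroup G] {U V : Finset X} (h : V ⊆ U)
    (d d' : ({x // x ∈ U} → O) → G) : marg h (d - d') = marg h d - marg h d' :=
  map_sub (pushforward (resSec h)) d d'

theorem globMarg_zero [Fintype X] (C : Finset X) : globMarg (0 : (X → O) → R) C = 0 :=
  map_zero (pushforward (resGlob · C))

theorem globMarg_add [Fintype X] (d d' : (X → O) → R) (C : Finset X) :
    globMarg (d + d') C = globMarg d C + globMarg d' C :=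
  map_add (pushforward (resGlob · C)) d d'

theorem marg_globMarg [Fintype X] (d : (X → O) → R) {C V : Finset X} (h : V ⊆ C) :
    marg h (globMarg d C) = globMarg d V :=
  pushforward_pushforward (resSec h) (resGlob · C) d

theorem sum_globMarg [Fintype X] (d : (X → O) → R) (C : Finset X) :
    ∑ s, globMarg d C s = ∑ t, d t :=
  sum_pushforward (resGlob · C) d

theorem globMarg_pushforward_extend_self [Fintype X] (t₀ : X → O) {C : Finset X}
    (r : ({x // x ∈ C} → O) → R) :
    globMarg (pushforward (Function.extend Subtype.val · t₀) r) C = r := by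
  rw [globMarg_eq_pushforward, pushforward_pushforward]
  exact (congrArg (pushforward · r) (funext (resGlob_extend t₀))).trans (pushforward_id r)

theorem globMarg_pushforward_extend [Fintype X] (t₀ : X → O) {C : Finset X} (C' : Finset X)
    (r : ({x // x ∈ C} → O) → R) :
    globMarg (pushforward (Function.extend Subtype.val · t₀) r) C' =
      globMarg (pushforward (Function.extend Subtype.val · t₀)
        (marg (inter_subset_left (s₂ := C')) r)) C' := by
  simp only [globMarg_eq_pushforward, marg_eq_pushforward, pushforward_pushforward]
  exact congrArg (pushforward · r) (funext (resGlob_extend_inter t₀ C'))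

theorem globMarg_pushforward_extend_eq_zero [Fintype X] (t₀ : X → O) {C C' : Finset X}
    {r : ({x // x ∈ C} → O) → R} (hr : marg (inter_subset_left (s₂ := C')) r = 0) :
    globMarg (pushforward (Function.extend Subtype.val · t₀) r) C' = 0 := by
  rw [globMarg_pushforward_extend, hr, map_zero, globMarg_zero]

end Marginal

section NoSignalling

variable {X O R G : Type} [DecidableEq X] [Fintype O] [DecidableEq O] [AddCommMonoid R]
  [AddCommGroup G]

/-- Compatibility of a family of weights on the sections over the contexts in `M`: any two of them
have the same marginal on the intersection of their contexts. The family is indexed by all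
subsets, but its values off `M` are irrelevant. -/
def NoSignalling (M : Finset (Finset X)) (e : (C : Finset X) → ({x // x ∈ C} → O) → R) : Prop :=
  ∀ C ∈ M, ∀ C' ∈ M,
    marg (show C ∩ C' ⊆ C from inter_subset_left) (e C) =
      marg (show C ∩ C' ⊆ C' from inter_subset_right) (e C')

theorem NoSignalling.mono {M N : Finset (Finset X)} {e : (C : Finset X) → ({x // x ∈ C} → O) → R}
    (he : NoSignalling N e) (hMN : M ⊆ N) : NoSignalling M e :=
  fun C hC C' hC' => he C (hMN hC) C' (hMN hC')

theorem noSignalling_comp_iff {S : Type} [AddCommMonoid S] {φ : R →+ S}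
    (hφ : Function.Injective φ) {M : Finset (Finset X)}
    {e : (C : Finset X) → ({x // x ∈ C} → O) → R} :
    NoSignalling M (fun C => φ ∘ e C) ↔ NoSignalling M e := by
  simp only [NoSignalling, marg_eq_pushforward, pushforward_comp_addMonoidHom,
    hφ.comp_left.eq_iff]

theorem noSignalling_of_globMarg_eq [Fintype X] {M : Finset (Finset X)}
    {e : (C : Finset X) → ({x // x ∈ C} → O) → R} {d : (X → O) → R}
    (hd : ∀ C ∈ M, globMarg d C = e C) : NoSignalling M e := by
  intro C hC C' hC'
  rw [← hd C hC, ← hd C' hC', marg_globMarg, marg_globMarg]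

theorem NoSignalling.exists_globMarg_eq_insert [Fintype X] [Nonempty (X → O)]
    {M : Finset (Finset X)} {C : Finset X} {e : (C : Finset X) → ({x // x ∈ C} → O) → G}
    (he : NoSignalling (insert C M) e) {d : (X → O) → G} (hd : ∀ C' ∈ M, globMarg d C' = e C')
    (hsum : ∑ s, e C s = ∑ t, d t) :
    ∃ d' : (X → O) → G, ∑ t, d' t = ∑ t, d t ∧ ∀ C' ∈ insert C M, globMarg d' C' = e C' := by
  obtain ⟨t₀⟩ := ‹Nonempty (X → O)›
  let defect := e C - globMarg d C
  let correction := pushforward (Function.extend Subtype.val · t₀) defect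
  have marg_defect (C' : Finset X) (hC' : C' ∈ M) :
      marg (inter_subset_left (s₂ := C')) defect = 0 := by
    rw [marg_sub, he C (mem_insert_self C M) C' (mem_insert_of_mem hC'), ← hd C' hC',
      marg_globMarg, marg_globMarg, sub_self]
  refine ⟨d + correction, ?_, fun C' hC' => ?_⟩
  · simp only [correction, defect, Pi.add_apply, Pi.sub_apply, sum_add_distrib, sum_pushforward,
      sum_sub_distrib, sum_globMarg, hsum, sub_self, add_zero]
  · rw [globMarg_add]
    rcases mem_insert.1 hC' with rfl | hC'
    · rw [globMarg_pushforward_extend_self, add_sub_cancel]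
    · rw [globMarg_pushforward_extend_eq_zero t₀ (marg_defect C' hC'), add_zero, hd C' hC']

theorem NoSignalling.exists_globMarg_eq [Fintype X] [Nonempty (X → O)] {M : Finset (Finset X)}
    {e : (C : Finset X) → ({x // x ∈ C} → O) → G} (he : NoSignalling M e) {m : G}
    (hm : ∀ C ∈ M, ∑ s, e C s = m) :
    ∃ d : (X → O) → G, ∑ t, d t = m ∧ ∀ C ∈ M, globMarg d C = e C := by
  induction M using Finset.induction_on with
  | empty =>
    obtain ⟨t₀⟩ := ‹Nonempty (X → O)›
    exact ⟨Pi.single t₀ m, Fintype.sum_pi_single' t₀ m, by simp⟩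
  | insert C M _ ih =>
    obtain ⟨d, rfl, hd⟩ := ih (he.mono (subset_insert C M)) fun C' hC' =>
      hm C' (mem_insert_of_mem hC')
    exact he.exists_globMarg_eq_insert hd (hm C (mem_insert_self C M))

theorem real_global_section_iff_no_signalling_general [Fintype X] [Nonempty (X → O)]
    {φ : R →+ G} (hφ : Function.Injective φ) (M : Finset (Finset X))
    (e : (C : Finset X) → ({x // x ∈ C} → O) → R) {m : R} (hm : ∀ C ∈ M, ∑ s, e C s = m) :
    (∃ d : (X → O) → G, ∑ t, d t = φ m ∧ ∀ C ∈ M, ∀ s, globMarg d C s = φ (e C s)) ↔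
      NoSignalling M e := by
  rw [← noSignalling_comp_iff hφ]
  constructor
  · rintro ⟨d, -, hd⟩
    exact noSignalling_of_globMarg_eq fun C hC => funext (hd C hC)
  · intro he
    obtain ⟨d, hsum, hd⟩ := he.exists_globMarg_eq (m := φ m) fun C hC => by
      simp only [Function.comp_apply, ← map_sum, hm C hC]
    exact ⟨d, hsum, fun C hC => congrFun (hd C hC)⟩

end NoSignalling

/-- A (not necessarily compatible) family of probability distributions on the
sections over the contexts of a measurement cover has a real-valued global section if and only
if it is compatible (no-signalling). -/
theorem real_global_section_iff_no_signalling
    {X O : Type} [Fintype X] [DecidableEq X] [Fintype O] [DecidableEq O]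
    (MM : Finset (Finset X))
    (hcov : ∀ x : X, ∃ C ∈ MM, x ∈ C)
    (hanti : ∀ C ∈ MM, ∀ C' ∈ MM, C ⊆ C' → C = C')
    (e : (C : Finset X) → ({x // x ∈ C} → O) → NNReal)
    (hdist : ∀ C ∈ MM, ∑ s, e C s = 1) :
    (∃ d : (X → O) → ℝ, (∑ t, d t = 1) ∧
      ∀ C ∈ MM, ∀ s : {x // x ∈ C} → O, globMarg d C s = (e C s : ℝ)) ↔
    (∀ C ∈ MM, ∀ C' ∈ MM,
      marg (show C ∩ C' ⊆ C from inter_subset_left) (e C) =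
      marg (show C ∩ C' ⊆ C' from inter_subset_right) (e C')) := by
  have := nonempty_assignment_of_sum_ne_zero hcov fun C hC => (hdist C hC).trans_ne one_ne_zero
  exact real_global_section_iff_no_signalling_general (φ := NNReal.toRealHom.toAddMonoidHom)
    NNReal.coe_injective MM e hdist
end

section
/- Let O = {1,...,l}, M a measurement cover on a finite set X, 𝒰 the set of partial contexts (subsets of X contained in some C ∈ M), and D := Σ_{U∈𝒰} (l−1)^{|U|}. Identify each compatible probabilistic model e over M with the vector in ℝ^t (t := Σ_{C∈M} l^{|C|}) whose (C,s)-entry is e_C(s). Then the linear subspace of ℝ^t spanned by the vectors arising from compatible probabilistic models has dimension at most D. -/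
open Finset

/-!
Every vector in the span is no-signalling: its marginal on a partial context `U` does not depend on
the context of `M` from which it is computed. Fix an outcome `o₀`. For `x ∈ U`, the marginal on
`U \ {x}` is the sum over the outcomes at `x` of the marginal on `U`, so the values of the latter at
sections with outcome `o₀` at `x` follow from its values at the other sections and from a smaller
partial context. A no-signalling vector is therefore determined by the values of its marginals at
the sections avoiding `o₀`, and there are `∑ U, (|O| - 1) ^ |U|` of these.
-/

theorem resGlob_surjective {X O : Type} [Nonempty O] (C : Finset X) :
    Function.Surjective fun t : X → O => resGlob t C :=
  Subtype.val_injective.surjective_comp_right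

section Marginals

variable {X O R : Type} [DecidableEq X] {U V W : Finset X}

theorem resSec_erase_eq_resGlob_iff {x : X} (hx : x ∈ U) (s : {x // x ∈ U} → O) (t : X → O) :
    resSec (erase_subset x U) s = resGlob t (U.erase x) ↔
      resGlob (Function.update t x (s ⟨x, hx⟩)) U = s := by
  simp only [funext_iff, Subtype.forall, resSec, resGlob, mem_erase]
  refine forall_congr' fun y => ?_
  obtain rfl | hy := eq_or_ne y x
  · simp
  · simp [hy, eq_comm]

variable [Fintype O] [DecidableEq O]

theorem marg_map [AddCommMonoid R] {S : Type} [AddCommMonoid S] (f : R →+ S) (h : V ⊆ U)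
    (d : ({x // x ∈ U} → O) → R) : marg h (f ∘ d) = f ∘ marg h d :=
  funext fun _ => (map_sum f _ _).symm

theorem marg_refl [AddCommMonoid R] (d : ({x // x ∈ U} → O) → R) :
    marg Subset.rfl d = d := by
  funext s
  change ∑ s' ∈ univ.filter (fun s' => s' = s), d s' = d s
  rw [filter_eq' univ s, if_pos (mem_univ s), sum_singleton]

theorem marg_marg [AddCommMonoid R] (hVU : V ⊆ U) (hWV : W ⊆ V) (d : ({x // x ∈ U} → O) → R) :
    marg hWV (marg hVU d) = marg (hWV.trans hVU) d := by
  funext s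
  have hmaps : ∀ s' ∈ univ.filter fun s' => resSec (hWV.trans hVU) s' = s,
      resSec hVU s' ∈ univ.filter fun r => resSec hWV r = s := by
    simp only [mem_filter, mem_univ, true_and]
    exact fun _ h => h
  simp only [marg]
  rw [← sum_fiberwise_of_maps_to hmaps]
  refine sum_congr rfl fun r hr => sum_congr ?_ fun _ _ => rfl
  ext s'
  simp only [mem_filter, mem_univ, true_and, iff_and_self]
  rintro rfl
  exact (mem_filter.1 hr).2

theorem marg_erase [AddCommMonoid R] {x : X} (hx : x ∈ U) (d : ({x // x ∈ U} → O) → R)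
    (t : X → O) :
    marg (erase_subset x U) d (resGlob t (U.erase x)) =
      ∑ a, d (resGlob (Function.update t x a) U) := by
  symm
  refine sum_bij' (fun a _ => resGlob (Function.update t x a) U) (fun s _ => s ⟨x, hx⟩)
    ?_ ?_ ?_ ?_ ?_ <;>
    simp +contextual [resSec_erase_eq_resGlob_iff hx, resGlob]

theorem eq_zero_of_marg_erase_eq_zero [AddCommMonoid R] {x : X} (hx : x ∈ U)
    {d : ({x // x ∈ U} → O) → R} {t : X → O} (o₀ : O)
    (herase : marg (erase_subset x U) d (resGlob t (U.erase x)) = 0)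
    (hupdate : ∀ a ≠ o₀, d (resGlob (Function.update t x a) U) = 0) :
    d (resGlob t U) = 0 := by
  have update_eq_zero : d (resGlob (Function.update t x o₀) U) = 0 := by
    rwa [marg_erase hx, Fintype.sum_eq_single o₀ hupdate] at herase
  obtain htx | htx := eq_or_ne (t x) o₀
  · rwa [← htx, Function.update_eq_self] at update_eq_zero
  · simpa only [Function.update_eq_self] using hupdate (t x) htx

theorem eq_zero_of_marg_eq_zero [AddCommMonoid R] {d : ({x // x ∈ U} → O) → R} (o₀ : O)
    (hd : ∀ (V : Finset X) (hV : V ⊆ U) (s : {x // x ∈ V} → O),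
      (∀ x, s x ≠ o₀) → marg hV d s = 0) :
    d = 0 := by
  -- Induction on the set `Z` of points at which `t` may take the value `o₀`.
  have marg_eq_zero (Z : Finset X) : ∀ (V : Finset X) (hV : V ⊆ U) (t : X → O),
      (∀ x ∈ V, x ∉ Z → t x ≠ o₀) → marg hV d (resGlob t V) = 0 := by
    induction Z using Finset.induction with
    | empty => exact fun V hV t ht => hd V hV _ fun x => ht x x.2 (notMem_empty _)
    | insert x Z _ ih =>
      intro V hV t ht
      have ht_of_ne (y : X) (hy : y ∈ V) (hyx : y ≠ x) (hyZ : y ∉ Z) : t y ≠ o₀ :=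
        ht y hy (by simp [hyx, hyZ])
      by_cases hxV : x ∈ V
      · refine eq_zero_of_marg_erase_eq_zero hxV o₀ ?_ fun a ha => ?_
        · rw [marg_marg]
          exact ih _ _ _ fun y hy => ht_of_ne y (mem_of_mem_erase hy) (ne_of_mem_erase hy)
        · refine ih _ _ _ fun y hy hyZ => ?_
          obtain rfl | hyx := eq_or_ne y x
          · simpa using ha
          · simpa [hyx] using ht_of_ne y hy hyx hyZ
      · exact ih V hV t fun y hy => ht_of_ne y hy (ne_of_mem_of_not_mem hy hxV)
  have : Nonempty O := ⟨o₀⟩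
  funext s
  obtain ⟨t, rfl⟩ := resGlob_surjective U s
  rw [← marg_refl d]
  exact marg_eq_zero U U Subset.rfl t fun x hx hxU => absurd hx hxU

end Marginals

section NoSignalling

variable {X O R : Type}

/-- The set `𝒰` of partial contexts of the family `M`: the subsets of its members. -/
def partialContexts [DecidableEq X] (M : Finset (Finset X)) : Finset (Finset X) :=
  M.biUnion powerset

@[simp]
theorem mem_partialContexts [DecidableEq X] {M : Finset (Finset X)} {U : Finset X} :
    U ∈ partialContexts M ↔ ∃ C ∈ M, U ⊆ C := by
  simp [partialContexts]

theorem filter_exists_superset_eq_partialContexts [Fintype X] [DecidableEq X]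
    (M : Finset (Finset X)) :
    univ.filter (fun U : Finset X => ∃ C ∈ M, U ⊆ C) = partialContexts M := by
  ext U
  simp

/-- The pairs `(C, s)` of a context `C ∈ M` and a section `s` over `C`, which index the vectors of
`ℝ^t`. -/
abbrev ContextSection (O : Type) (M : Finset (Finset X)) : Type :=
  (C : {C : Finset X // C ∈ M}) × ({x // x ∈ C.1} → O)

variable [DecidableEq X] [Fintype O] [DecidableEq O] {M : Finset (Finset X)}

/-- The marginal on `U` of the component of a vector at a context `C ⊇ U`, as a linear map. -/
def contextMarg [Semiring R] (C : {C : Finset X // C ∈ M}) {U : Finset X} (hU : U ⊆ C.1) :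
    (ContextSection O M → R) →ₗ[R] (({x // x ∈ U} → O) → R) where
  toFun v := marg hU fun s => v ⟨C, s⟩
  map_add' _ _ := funext fun _ => sum_add_distrib
  map_smul' _ _ := funext fun _ => (mul_sum _ _ _).symm

theorem contextMarg_apply [Semiring R] (C : {C : Finset X // C ∈ M}) {U : Finset X}
    (hU : U ⊆ C.1) (v : ContextSection O M → R) :
    contextMarg C hU v = marg hU fun s => v ⟨C, s⟩ :=
  rfl

variable (O R M) in
/-- The vectors satisfying the compatibility condition of a probabilistic model, with entries in any
semiring: neither positivity nor normalization is imposed. -/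
def noSignalling [Semiring R] : Submodule R (ContextSection O M → R) :=
  ⨅ (C : {C : Finset X // C ∈ M}) (C' : {C : Finset X // C ∈ M}),
    LinearMap.eqLocus (contextMarg C (inter_subset_left (s₂ := C'.1)))
      (contextMarg C' (inter_subset_right (s₁ := C.1)))

theorem mem_noSignalling [Semiring R] {v : ContextSection O M → R} :
    v ∈ noSignalling O R M ↔ ∀ C C' : {C : Finset X // C ∈ M},
      contextMarg C (inter_subset_left (s₂ := C'.1)) v =
        contextMarg C' (inter_subset_right (s₁ := C.1)) v := by
  simp only [noSignalling, Submodule.mem_iInf, LinearMap.mem_eqLocus]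

theorem contextMarg_eq_of_mem_noSignalling [Semiring R] {v : ContextSection O M → R}
    (hv : v ∈ noSignalling O R M) {C C' : {C : Finset X // C ∈ M}} {U : Finset X}
    (hC : U ⊆ C.1) (hC' : U ⊆ C'.1) : contextMarg C hC v = contextMarg C' hC' v := by
  have h := congrArg (marg (subset_inter hC hC')) (mem_noSignalling.1 hv C C')
  simpa only [contextMarg_apply, marg_marg] using h

theorem map_mem_noSignalling [Semiring R] {S : Type} [AddCommMonoid S] (f : S →+ R)
    {e : (C : Finset X) → ({x // x ∈ C} → O) → S}
    (he : ∀ C ∈ M, ∀ C' ∈ M,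
      marg (inter_subset_left : C ∩ C' ⊆ C) (e C) =
        marg (inter_subset_right : C ∩ C' ⊆ C') (e C')) :
    (fun p => f (e p.1.1 p.2)) ∈ noSignalling O R M := by
  refine mem_noSignalling.2 fun C C' => ?_
  calc marg inter_subset_left (f ∘ e C.1)
      = f ∘ marg inter_subset_left (e C.1) := marg_map f _ _
    _ = f ∘ marg inter_subset_right (e C'.1) := by rw [he C C.2 C' C'.2]
    _ = marg inter_subset_right (f ∘ e C'.1) := (marg_map f _ _).symm

theorem exists_superset_of_mem_partialContexts (U : {U // U ∈ partialContexts M}) :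
    ∃ C : {C : Finset X // C ∈ M}, U.1 ⊆ C.1 := by
  obtain ⟨C, hC, hUC⟩ := mem_partialContexts.1 U.2
  exact ⟨⟨C, hC⟩, hUC⟩

/-- The values of the marginals of a vector at the sections over partial contexts that avoid the
outcome `o₀`. The marginal on `U` is computed from an arbitrarily chosen context containing `U`. -/
noncomputable def avoidingMarginals [Semiring R] (o₀ : O) :
    (ContextSection O M → R) →ₗ[R]
      ((U : {U // U ∈ partialContexts M}) × ({x // x ∈ U.1} → {o // o ≠ o₀}) → R) :=
  LinearMap.pi fun p =>
    LinearMap.proj (fun x => (p.2 x : O)) ∘ₗ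
      contextMarg _ (exists_superset_of_mem_partialContexts p.1).choose_spec

theorem eq_zero_of_avoidingMarginals_eq_zero [Semiring R] (o₀ : O)
    {v : ContextSection O M → R} (hv : v ∈ noSignalling O R M)
    (h : avoidingMarginals o₀ v = 0) : v = 0 := by
  have component_eq_zero (C : {C : Finset X // C ∈ M}) : (fun s => v ⟨C, s⟩) = 0 := by
    refine eq_zero_of_marg_eq_zero o₀ fun U hU s hs => ?_
    let U' : {U // U ∈ partialContexts M} := ⟨U, mem_partialContexts.2 ⟨C, C.2, hU⟩⟩
    have hU' := (exists_superset_of_mem_partialContexts U').choose_spec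
    calc contextMarg C hU v s
        = contextMarg _ hU' v s := by rw [contextMarg_eq_of_mem_noSignalling hv hU hU']
      _ = 0 := congrFun h ⟨U', fun x => ⟨s x, hs x⟩⟩
  funext ⟨C, s⟩
  exact congrFun (component_eq_zero C) s

theorem no_signalling_span_dimension_le_general [Ring R] [StrongRankCondition R] [Nonempty O]
    (M : Finset (Finset X)) :
    Module.finrank R (noSignalling O R M) ≤
      ∑ U ∈ partialContexts M, (Fintype.card O - 1) ^ #U := by
  obtain ⟨o₀⟩ := ‹Nonempty O›
  have injective : Function.Injective
      ((avoidingMarginals (R := R) o₀).domRestrict (noSignalling O R M)) :=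
    (injective_iff_map_eq_zero _).2 fun v hv =>
      Subtype.ext (eq_zero_of_avoidingMarginals_eq_zero o₀ v.2 hv)
  calc Module.finrank R (noSignalling O R M)
      ≤ Module.finrank R
          ((U : {U // U ∈ partialContexts M}) × ({x // x ∈ U.1} → {o // o ≠ o₀}) → R) :=
        LinearMap.finrank_le_finrank_of_injective injective
    _ = ∑ U : {U // U ∈ partialContexts M}, (Fintype.card O - 1) ^ #U.1 := by
        simp [Fintype.card_sigma, Fintype.card_subtype_compl]
    _ = ∑ U ∈ partialContexts M, (Fintype.card O - 1) ^ #U :=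
        sum_coe_sort _ fun U => (Fintype.card O - 1) ^ #U

end NoSignalling

/-- The linear subspace of `ℝ^t` (vectors indexed by pairs `(C, s)` of a
context `C ∈ M` and a section `s` over `C`) spanned by the vectors arising from compatible
probabilistic models over the measurement cover `M` has dimension at most
`D = ∑_{U ∈ 𝒰} (l-1)^{|U|}`, where `𝒰` is the set of partial contexts. -/
theorem no_signalling_span_dimension_le
    {X : Type} [Fintype X] [DecidableEq X] {l : ℕ} (hl : 1 ≤ l)
    (MM : Finset (Finset X))
    (hcov : ∀ x : X, ∃ C ∈ MM, x ∈ C)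
    (hanti : ∀ C ∈ MM, ∀ C' ∈ MM, C ⊆ C' → C = C') :
    Module.finrank ℝ ↥(Submodule.span ℝ
      { v : ((C : {C : Finset X // C ∈ MM}) × ({x // x ∈ C.1} → Fin l)) → ℝ |
        ∃ e : (C : Finset X) → ({x // x ∈ C} → Fin l) → NNReal,
          (∀ C ∈ MM, ∑ s, e C s = 1) ∧
          (∀ C ∈ MM, ∀ C' ∈ MM,
            marg (show C ∩ C' ⊆ C from inter_subset_left) (e C) =
            marg (show C ∩ C' ⊆ C' from inter_subset_right) (e C')) ∧
          v = fun p => (e p.1.1 p.2 : ℝ) })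
      ≤ ∑ U ∈ univ.filter (fun U : Finset X => ∃ C ∈ MM, U ⊆ C), (l - 1) ^ U.card := by
  have : Nonempty (Fin l) := ⟨⟨0, hl⟩⟩
  have finrank_le := no_signalling_span_dimension_le_general (R := ℝ) (O := Fin l) MM
  rw [Fintype.card_fin, ← filter_exists_superset_eq_partialContexts] at finrank_le
  refine (Submodule.finrank_mono (Submodule.span_le.2 ?_)).trans finrank_le
  rintro _ ⟨e, -, he, rfl⟩
  exact map_mem_noSignalling NNReal.toRealHom.toAddMonoidHom he
end
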